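/- Let a : ℕ → ℤ be a sequence of positive integers, let b, c : ℝ → ℝ with b(x) > 0, and suppose a(n) ~ b(n)·e^{c(n)} (i.e., lim_{n→∞} a(n)/(b(n)e^{c(n)}) = 1). Suppose there exists an integer h ≥ 1 such that: (1) c is h-times differentiable on some interval [x₀,∞), the h-th derivative c^(h)(x) tends to 0 as x → ∞ and is monotonic for all sufficiently large x; (2) x·|c^(h)(x)| → ∞ as x → ∞; and (3) the function x ↦ log b(x) is h-times differentiable on [x₀,∞) and its h-th derivative satisfies (d^h/dx^h)(log b(x)) / c^(h)(x) → 0 as x → ∞. Then a is Benford. -/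

import Mathlib

/-!
Fix a base `k` and put `u = log b + c`, so that `log_k a(n) = u(n) / log k + o(1)`. The integer
`a(n)` begins with the digits of `d` iff `log_k a(n)` modulo 1 lies in the arc from `log_k d` to
`log_k (d + 1)`, up to finitely many exceptional points of the circle
(`beginsWith_mem_closedBall`, `beginsWith_or_of_mem_closedBall`). So it is enough that
`log_k a(n)` is equidistributed on the circle, and by Weyl's criterion (`meanZero_continuous`,
`tendsto_mean_closedBall`) that `exp (iθ u(n))` has Cesàro mean zero for every real `θ ≠ 0`.

By the mean value theorem the `h`-th difference of `u` at `n` is a value `u^(h)(ξ)` with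
`n ≤ ξ ≤ n + h`, and `u^(h) ~ c^(h)`. Let `G = |c^(h)|`, which eventually decreases to zero and
satisfies `n G(n) → ∞`. The quotient `G(n + j) / G(n)` need not tend to one, but
`1 - G(n + j) / G(n)` has mean zero, since its sum is controlled by `log (1 / G(N)) = O(log N)`
(`meanZero_one_sub_ratio`). Hence the `h`-th difference of `u` equals, up to sign, `G(n)` with a
relative error of mean zero; this is the property `HasFejerDiff h`.

The property passes from `u` to `u(n + j) - u(n)` with `h` replaced by `h - 1`
(`HasFejerDiff.shift_sub`), so van der Corput's inequality (`meanZero_of_correlations`) reduces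
everything to `h = 1`. There, with `z(n) = exp (iθ u(n))`, the quotient
`(z(n + 1) - z(n)) / G(n)` is `iθ z(n)` up to an error of mean zero, while partial summation bounds the sum of these quotients by
`2 / G(N) = o(N)` (`HasFejerDiff.meanZero_one`).
-/

open Filter Topology

/-- `|x|` begins with the base-`k` digit string of `d`:
there is an integer `m ≥ 0` with `d·k^m ≤ |x| < (d+1)·k^m`. -/
def BeginsWith (k d : ℕ) (x : ℝ) : Prop :=
  ∃ m : ℕ, (d : ℝ) * (k : ℝ) ^ m ≤ |x| ∧ |x| < ((d : ℝ) + 1) * (k : ℝ) ^ m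

open scoped Classical in
/-- The set `S ⊆ ℕ` has natural density `r`. -/
def HasNatDensity (S : Set ℕ) (r : ℝ) : Prop :=
  Tendsto (fun N : ℕ => (((Finset.range N).filter (fun n => n ∈ S)).card : ℝ) / N)
    atTop (𝓝 r)

/-- The sequence `a` is Benford. -/
def IsBenford (a : ℕ → ℝ) : Prop :=
  ∀ k : ℕ, 2 ≤ k → ∀ d : ℕ, 0 < d →
    HasNatDensity {n | BeginsWith k d (a n)} (Real.logb k (d + 1) - Real.logb k d)

open scoped Classical in
/-- The real sequence `x` is uniformly distributed modulo 1. -/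
def UnifDistMod1 (x : ℕ → ℝ) : Prop :=
  ∀ a b : ℝ, 0 ≤ a → a < b → b ≤ 1 →
    Tendsto (fun N : ℕ =>
        (((Finset.Icc 1 N).filter (fun n => Int.fract (x n) ∈ Set.Ico a b)).card : ℝ) / N)
      atTop (𝓝 (b - a))

/-! ### Cesàro means and van der Corput's inequality -/

/-- The sequence `z` has Cesàro mean zero: `(1/N) ∑_{n<N} z n → 0`. -/
def MeanZero {E : Type*} [NormedAddCommGroup E] [NormedSpace ℝ E] (z : ℕ → E) : Prop :=
  Tendsto (fun N : ℕ => (N : ℝ)⁻¹ • ∑ n ∈ Finset.range N, z n) atTop (𝓝 0)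

namespace MeanZero

variable {E : Type*} [NormedAddCommGroup E] [NormedSpace ℝ E]

lemma of_tendsto {z : ℕ → E} (h : Tendsto z atTop (𝓝 0)) : MeanZero z := h.cesaro_smul

lemma add {z w : ℕ → E} (hz : MeanZero z) (hw : MeanZero w) :
    MeanZero (fun n => z n + w n) := by
  have := Tendsto.add hz hw
  simpa [MeanZero, Finset.sum_add_distrib, smul_add] using this

lemma const_smul {z : ℕ → E} (c : ℝ) (hz : MeanZero z) : MeanZero (fun n => c • z n) := by
  have := Tendsto.const_smul hz c
  simpa [MeanZero, ← Finset.smul_sum, smul_comm c] using this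

lemma const_mul {𝕜 : Type*} [RCLike 𝕜] {z : ℕ → 𝕜} (c : 𝕜) (hz : MeanZero z) :
    MeanZero (fun n => c * z n) := by
  have := Tendsto.const_mul c hz
  simpa [MeanZero, ← Finset.mul_sum] using this

lemma sum {ι : Type*} (s : Finset ι) {z : ι → ℕ → E} (h : ∀ i ∈ s, MeanZero (z i)) :
    MeanZero (fun n => ∑ i ∈ s, z i n) := by
  classical
  induction s using Finset.induction_on with
  | empty => exact of_tendsto (by simp)
  | insert i s hi ih =>
    simp only [Finset.sum_insert hi]
    exact (h i (by simp)).add (ih fun j hj => h j (by simp [hj]))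

lemma of_le {z : ℕ → E} {η : ℕ → ℝ} (hη : MeanZero η) (h : ∀ n, ‖z n‖ ≤ η n) : MeanZero z := by
  refine squeeze_zero_norm (fun N => ?_) hη
  rw [norm_smul, smul_eq_mul, norm_inv, Real.norm_natCast]
  gcongr
  exact norm_sum_le_of_le _ fun n _ => h n

lemma of_eventually_le {z : ℕ → E} {η : ℕ → ℝ} (hη : MeanZero η)
    (h : ∀ᶠ n in atTop, ‖z n‖ ≤ η n) : MeanZero z := by
  classical
  have h0 : MeanZero (fun n => if ‖z n‖ ≤ η n then 0 else ‖z n‖ + |η n|) := by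
    refine of_tendsto (tendsto_const_nhds.congr' ?_)
    filter_upwards [h] with n hn
    simp [hn]
  refine (hη.add h0).of_le fun n => ?_
  split_ifs with hn
  · simpa using hn
  · linarith [neg_abs_le (η n)]

lemma shift {z : ℕ → E} (h : MeanZero z) : MeanZero (fun n => z (n + 1)) := by
  have h1 : Tendsto (fun N : ℕ => ((N + 1 : ℕ) : ℝ)⁻¹ • ∑ n ∈ Finset.range (N + 1), z n)
      atTop (𝓝 0) := h.comp (tendsto_add_atTop_nat 1)
  have h2 : Tendsto (fun N : ℕ => 1 + (N : ℝ)⁻¹) atTop (𝓝 (1 + 0)) :=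
    tendsto_const_nhds.add tendsto_inv_atTop_nhds_zero_nat
  have h3 : Tendsto (fun N : ℕ => (N : ℝ)⁻¹ • z 0) atTop (𝓝 ((0 : ℝ) • z 0)) :=
    tendsto_inv_atTop_nhds_zero_nat.smul_const _
  have h4 := (h2.smul h1).sub h3
  simp only [smul_zero, zero_smul, sub_zero] at h4
  refine h4.congr' ?_
  filter_upwards [eventually_gt_atTop 0] with N hN
  have : (N : ℝ) ≠ 0 := by positivity
  rw [Finset.sum_range_succ', smul_smul]
  have e : (1 + (N : ℝ)⁻¹) * ((N + 1 : ℕ) : ℝ)⁻¹ = (N : ℝ)⁻¹ := by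
    push_cast
    field_simp
  rw [e, smul_add]
  abel

lemma shift_nat {z : ℕ → E} (h : MeanZero z) (j : ℕ) : MeanZero (fun n => z (n + j)) := by
  induction j with
  | zero => exact h
  | succ j ih => simpa [add_assoc, add_comm 1 j] using ih.shift

end MeanZero

/-- A positive antitone `G` with `n G(n) → ∞` cannot drop too often: the relative decrements
telescope against `log G(0) - log G(N) = O(log N)`. -/
lemma meanZero_one_sub_ratio {G : ℕ → ℝ} (hpos : ∀ n, 0 < G n) (hanti : Antitone G)
    (hinf : Tendsto (fun n : ℕ => n * G n) atTop atTop) :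
    MeanZero (fun n => 1 - G (n + 1) / G n) := by
  have hlog : Tendsto (fun N : ℕ => (N : ℝ)⁻¹ * Real.log (G 0) + Real.log N / N) atTop
      (𝓝 (0 * Real.log (G 0) + 0)) := by
    refine (tendsto_inv_atTop_nhds_zero_nat.mul_const _).add ?_
    exact (Real.isLittleO_log_id_atTop.tendsto_div_nhds_zero).comp tendsto_natCast_atTop_atTop
  rw [zero_mul, zero_add] at hlog
  refine squeeze_zero' (Eventually.of_forall fun N => ?_) ?_ hlog
  · refine smul_nonneg (by positivity) (Finset.sum_nonneg fun n _ => ?_)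
    rw [sub_nonneg, div_le_one (hpos n)]
    exact hanti (Nat.le_succ n)
  · filter_upwards [hinf.eventually_ge_atTop 1, eventually_gt_atTop 0] with N hN hN0
    have hN' : (0 : ℝ) < N := by exact_mod_cast hN0
    have h1 : ∑ n ∈ Finset.range N, (1 - G (n + 1) / G n) ≤ Real.log (G 0) - Real.log (G N) := by
      rw [← Finset.sum_range_sub' (fun n => Real.log (G n))]
      refine Finset.sum_le_sum fun n _ => ?_
      have := Real.log_le_sub_one_of_pos (div_pos (hpos (n + 1)) (hpos n))
      rw [Real.log_div (hpos _).ne' (hpos _).ne'] at this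
      linarith
    have h2 : -Real.log (G N) ≤ Real.log N := by
      have := Real.log_nonneg hN
      rw [Real.log_mul hN'.ne' (hpos N).ne'] at this
      linarith
    rw [smul_eq_mul, div_eq_inv_mul, ← mul_add]
    gcongr
    linarith

lemma meanZero_one_sub_ratio_nat {G : ℕ → ℝ} (hpos : ∀ n, 0 < G n) (hanti : Antitone G)
    (hinf : Tendsto (fun n : ℕ => n * G n) atTop atTop) (j : ℕ) :
    MeanZero (fun n => 1 - G (n + j) / G n) := by
  induction j with
  | zero => exact .of_tendsto (by simp [div_self (hpos _).ne'])
  | succ j ih =>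
    refine (ih.add ((meanZero_one_sub_ratio hpos hanti hinf).shift_nat j)).of_le fun n => ?_
    have hp : G (n + j) / G n ≤ 1 := (div_le_one (hpos n)).2 (hanti (by omega))
    have hq : G (n + j + 1) / G (n + j) ≤ 1 := (div_le_one (hpos _)).2 (hanti (by omega))
    have e : G (n + (j + 1)) / G n = G (n + j) / G n * (G (n + j + 1) / G (n + j)) := by
      have := (hpos n).ne'
      have := (hpos (n + j)).ne'
      rw [← add_assoc]
      field_simp
    have hp0 := div_pos (hpos (n + j)) (hpos n)
    have hq0 := div_pos (hpos (n + j + 1)) (hpos (n + j))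
    rw [e, Real.norm_eq_abs, abs_of_nonneg] <;> nlinarith

/-- The van der Corput inequality in qualitative form: a sequence on the unit circle has mean zero
as soon as all its correlations `z (n + j) * conj (z n)`, `j ≥ 1`, have mean zero. -/
lemma meanZero_of_correlations {z : ℕ → ℂ} (hz : ∀ n, ‖z n‖ = 1)
    (hcor : ∀ j : ℕ, 1 ≤ j → MeanZero (fun n => z (n + j) * (starRingEnd ℂ) (z n))) :
    MeanZero z := by
  have hcor' : ∀ k l : ℕ, k ≠ l →
      MeanZero (fun n => (z (n + k) * (starRingEnd ℂ) (z (n + l))).re) := by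
    intro k l hkl
    have key : ∀ p q : ℕ, p < q →
        MeanZero (fun n => (z (n + q) * (starRingEnd ℂ) (z (n + p))).re) := by
      intro p q hpq
      have h1 := (hcor (q - p) (by omega)).shift_nat p
      have h2 := (Complex.continuous_re.tendsto 0).comp h1
      simp only [Complex.zero_re] at h2
      refine h2.congr fun N => ?_
      simp only [Function.comp, Complex.smul_re, Complex.re_sum]
      congr 1
      refine Finset.sum_congr rfl fun n _ => ?_
      rw [show n + p + (q - p) = n + q by omega]
    rcases lt_or_gt_of_ne hkl with h | h
    · refine (key k l h).congr fun N => ?_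
      congr 1
      refine Finset.sum_congr rfl fun n _ => ?_
      simp [Complex.mul_re, mul_comm]
    · exact key l k h
  -- mean square of the averages over windows of length `H`
  have hsq : ∀ H : ℕ, MeanZero (fun n => ‖∑ k ∈ Finset.range H, z (n + k)‖ ^ 2 - H) := by
    intro H
    have e : ∀ n, ‖∑ k ∈ Finset.range H, z (n + k)‖ ^ 2 - H =
        ∑ k ∈ Finset.range H, ∑ l ∈ Finset.range H,
          if k = l then 0 else (z (n + k) * (starRingEnd ℂ) (z (n + l))).re := by
      intro n
      have h1 : ‖∑ k ∈ Finset.range H, z (n + k)‖ ^ 2 =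
          ∑ k ∈ Finset.range H, ∑ l ∈ Finset.range H,
            (z (n + k) * (starRingEnd ℂ) (z (n + l))).re := by
        have : ((‖∑ k ∈ Finset.range H, z (n + k)‖ ^ 2 : ℝ) : ℂ).re =
          ((∑ k ∈ Finset.range H, z (n + k)) *
            (starRingEnd ℂ) (∑ k ∈ Finset.range H, z (n + k))).re := by
          rw [Complex.mul_conj']
          norm_cast
        rw [Complex.ofReal_re] at this
        rw [this, map_sum, Finset.sum_mul_sum]
        simp only [Complex.re_sum]
      have h2 : (H : ℝ) = ∑ k ∈ Finset.range H, ∑ l ∈ Finset.range H,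
          if k = l then (1 : ℝ) else 0 := by
        simp only [Finset.sum_ite_eq, Finset.mem_range]
        rw [Finset.sum_congr rfl fun k hk => if_pos (Finset.mem_range.1 hk)]
        simp
      rw [h1, h2, ← Finset.sum_sub_distrib]
      refine Finset.sum_congr rfl fun k _ => ?_
      rw [← Finset.sum_sub_distrib]
      refine Finset.sum_congr rfl fun l _ => ?_
      split_ifs with hkl
      · subst hkl
        rw [Complex.mul_conj', hz]
        simp
      · simp
    simp only [e]
    refine MeanZero.sum _ fun k _ => MeanZero.sum _ fun l _ => ?_
    by_cases hkl : k = l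
    · simpa [hkl] using MeanZero.of_tendsto (E := ℝ) tendsto_const_nhds
    · simpa [hkl] using hcor' k l hkl
  have hshift : ∀ k N : ℕ,
      ‖∑ n ∈ Finset.range N, z (n + k) - ∑ n ∈ Finset.range N, z n‖ ≤ 2 * k := by
    intro k N
    induction k with
    | zero => simp
    | succ k ih =>
      have e : ∑ n ∈ Finset.range N, z (n + (k + 1)) - ∑ n ∈ Finset.range N, z (n + k)
          = z (N + k) - z k := by
        have := Finset.sum_range_sub (fun n => z (n + k)) N
        rw [← Finset.sum_sub_distrib]
        simpa [add_assoc, add_comm 1 k] using this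
      calc _ = ‖(∑ n ∈ Finset.range N, z (n + (k + 1)) - ∑ n ∈ Finset.range N, z (n + k)) +
            (∑ n ∈ Finset.range N, z (n + k) - ∑ n ∈ Finset.range N, z n)‖ := by
              congr 1; abel
        _ ≤ ‖z (N + k) - z k‖ + 2 * k := by
              rw [e]; exact (norm_add_le _ _).trans (by gcongr)
        _ ≤ (1 + 1) + 2 * k := by
              gcongr
              refine (norm_sub_le _ _).trans ?_
              rw [hz, hz]
        _ = 2 * ((k + 1 : ℕ) : ℝ) := by push_cast; ring
  rw [MeanZero, tendsto_zero_iff_norm_tendsto_zero, Metric.tendsto_atTop]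
  intro ε hε
  -- a window length `H > 8 / ε²`, so that `2 H ≤ (H ε / 2)²`
  obtain ⟨H, hH⟩ := exists_nat_gt (8 / ε ^ 2)
  have hH0 : (0 : ℝ) < H := lt_trans (by positivity) hH
  have hH1 : 0 < H := by exact_mod_cast hH0
  have hs1 : ∀ᶠ N : ℕ in atTop,
      (N : ℝ)⁻¹ • ∑ n ∈ Finset.range N, (‖∑ k ∈ Finset.range H, z (n + k)‖ ^ 2 - H) < H :=
    (hsq H).eventually (gt_mem_nhds hH0)
  have hs2 : ∀ᶠ N : ℕ in atTop, (N : ℝ)⁻¹ * (2 * H) < ε / 2 := by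
    have : Tendsto (fun N : ℕ => (N : ℝ)⁻¹ * (2 * H)) atTop (𝓝 (0 * (2 * H))) :=
      tendsto_inv_atTop_nhds_zero_nat.mul_const _
    rw [zero_mul] at this
    exact this.eventually (gt_mem_nhds (by positivity))
  obtain ⟨N₀, hN₀⟩ := eventually_atTop.1 (hs1.and (hs2.and (eventually_gt_atTop 0)))
  refine ⟨N₀, fun N hN => ?_⟩
  obtain ⟨h1, h2, hNpos⟩ := hN₀ N hN
  have hNr : (0 : ℝ) < N := by exact_mod_cast hNpos
  set S := ∑ n ∈ Finset.range N, z n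
  set T := ∑ n ∈ Finset.range N, ∑ k ∈ Finset.range H, z (n + k) with hT
  have hTS : ‖(H : ℂ) * S - T‖ ≤ H * (2 * H) := by
    have e : T - (H : ℂ) * S =
        ∑ k ∈ Finset.range H, (∑ n ∈ Finset.range N, z (n + k) - S) := by
      rw [hT, Finset.sum_comm, Finset.sum_sub_distrib]
      simp
    rw [norm_sub_rev, e]
    calc _ ≤ ∑ k ∈ Finset.range H, (2 * H : ℝ) := by
          refine norm_sum_le_of_le _ fun k hk => (hshift k N).trans ?_
          have : k < H := Finset.mem_range.1 hk
          gcongr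
      _ = _ := by simp
  have hTsq : ‖T‖ ^ 2 ≤ N * (N * (2 * H)) := by
    have hcs : ‖T‖ ^ 2 ≤ N * ∑ n ∈ Finset.range N, ‖∑ k ∈ Finset.range H, z (n + k)‖ ^ 2 := by
      have := sq_sum_le_card_mul_sum_sq (s := Finset.range N)
        (f := fun n => ‖∑ k ∈ Finset.range H, z (n + k)‖)
      rw [Finset.card_range] at this
      refine le_trans ?_ this
      gcongr
      exact norm_sum_le _ _
    refine hcs.trans ?_
    gcongr
    rw [Finset.sum_sub_distrib, smul_eq_mul, inv_mul_lt_iff₀ hNr] at h1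
    simp at h1
    linarith
  have hTle : ‖T‖ ≤ N * (H * (ε / 2)) := by
    refine abs_le_of_sq_le_sq' ?_ (by positivity) |>.2
    refine hTsq.trans ?_
    rw [div_lt_iff₀ (by positivity)] at hH
    have : (2 * H : ℝ) ≤ (H * (ε / 2)) ^ 2 := by nlinarith
    calc (N * (N * (2 * H)) : ℝ) = N ^ 2 * (2 * H) := by ring
      _ ≤ N ^ 2 * (H * (ε / 2)) ^ 2 := by gcongr
      _ = _ := by ring
  have hS : H * ‖S‖ ≤ H * (2 * H) + N * (H * (ε / 2)) := by
    have := norm_le_norm_add_norm_sub' ((H : ℂ) * S) T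
    rw [norm_mul, Complex.norm_natCast] at this
    linarith
  have hS' : ‖S‖ ≤ 2 * H + N * (ε / 2) := by
    refine le_of_mul_le_mul_left ?_ hH0
    linarith
  rw [Real.dist_eq, sub_zero, abs_norm, norm_smul, norm_inv, Real.norm_natCast]
  calc (N : ℝ)⁻¹ * ‖S‖ ≤ (N : ℝ)⁻¹ * (2 * H + N * (ε / 2)) := by gcongr
    _ = (N : ℝ)⁻¹ * (2 * H) + ε / 2 := by field_simp
    _ < ε := by linarith

/-! ### Fejér's theorem and its higher order version -/

/-- The `h`-th difference of `u` agrees, up to a relative error of mean zero, with a positive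
antitone sequence `G` tending to zero for which `n G(n) → ∞`. -/
def HasFejerDiff (h : ℕ) (u : ℕ → ℝ) : Prop :=
  ∃ G : ℕ → ℝ, (∀ n, 0 < G n) ∧ Antitone G ∧ Tendsto G atTop (𝓝 0) ∧
    Tendsto (fun n : ℕ => n * G n) atTop atTop ∧
    MeanZero (fun n => |(fwdDiff 1)^[h] u n / G n - 1|)

/-- Summation by parts against the monotone weight `1 / G`. -/
lemma norm_sum_diff_div_le {G : ℕ → ℝ} (hpos : ∀ n, 0 < G n) (hanti : Antitone G)
    {z : ℕ → ℂ} (hz : ∀ n, ‖z n‖ = 1) (N : ℕ) :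
    ‖∑ n ∈ Finset.range N, (z (n + 1) - z n) / (G n : ℂ)‖ ≤ 2 / G N := by
  have key : ‖∑ n ∈ Finset.range N, (z (n + 1) - z n) / (G n : ℂ) - z N / (G N : ℂ)‖
      ≤ (G N)⁻¹ := by
    induction N with
    | zero => simp [hz, abs_of_pos (hpos 0)]
    | succ N ih =>
      rw [Finset.sum_range_succ]
      have hw : (G N)⁻¹ ≤ (G (N + 1))⁻¹ := inv_anti₀ (hpos _) (hanti (Nat.le_succ N))
      calc _ = ‖(∑ n ∈ Finset.range N, (z (n + 1) - z n) / (G n : ℂ) - z N / (G N : ℂ)) +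
            (((G N)⁻¹ - (G (N + 1))⁻¹ : ℝ) : ℂ) * z (N + 1)‖ := by
              congr 1; push_cast; ring
        _ ≤ (G N)⁻¹ + ((G (N + 1))⁻¹ - (G N)⁻¹) := by
              refine (norm_add_le _ _).trans (add_le_add ih ?_)
              rw [norm_mul, hz, mul_one, Complex.norm_real, Real.norm_eq_abs, abs_sub_comm,
                abs_of_nonneg (by linarith)]
        _ = _ := by ring
  have h1 : ‖z N / (G N : ℂ)‖ = (G N)⁻¹ := by
    simp [hz, abs_of_pos (hpos N)]
  have := norm_le_norm_add_norm_sub' (∑ n ∈ Finset.range N, (z (n + 1) - z n) / (G n : ℂ))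
    (z N / (G N : ℂ))
  rw [div_eq_mul_inv]
  linarith

/-- Fejér's theorem: the case of first differences. Dividing `z (n+1) - z n` by `G n` gives
`iθ z n` up to an error of mean zero, and the quotients have mean zero by partial summation. -/
lemma HasFejerDiff.meanZero_one {u : ℕ → ℝ} (hu : HasFejerDiff 1 u) {θ : ℝ} (hθ : θ ≠ 0) :
    MeanZero (fun n => Complex.exp (Complex.I * (θ * u n : ℝ))) := by
  obtain ⟨G, hpos, hanti, hzero, hinf, hmean⟩ := hu
  set z : ℕ → ℂ := fun n => Complex.exp (Complex.I * (θ * u n : ℝ)) with hzdef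
  have hz : ∀ n, ‖z n‖ = 1 := fun n => Complex.norm_exp_I_mul_ofReal _
  have h1 : MeanZero (fun n => (z (n + 1) - z n) / (G n : ℂ)) := by
    have hlim : Tendsto (fun N : ℕ => 2 * ((N : ℝ) * G N)⁻¹) atTop (𝓝 (2 * 0)) :=
      hinf.inv_tendsto_atTop.const_mul 2
    rw [mul_zero] at hlim
    refine squeeze_zero_norm (fun N => ?_) hlim
    rw [norm_smul, norm_inv, Real.norm_natCast, mul_inv, mul_left_comm]
    gcongr
    exact norm_sum_diff_div_le hpos hanti hz N
  have h2 : MeanZero (fun n => Complex.I * θ * z n - (z (n + 1) - z n) / (G n : ℂ)) := by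
    refine MeanZero.of_eventually_le
      ((hmean.const_smul |θ|).add ((MeanZero.of_tendsto hzero).const_smul (θ ^ 2))) ?_
    have hsmall : ∀ᶠ n in atTop, |θ| * G n < 1 := by
      have : Tendsto (fun n => |θ| * G n) atTop (𝓝 (|θ| * 0)) := hzero.const_mul _
      rw [mul_zero] at this
      exact this.eventually (gt_mem_nhds one_pos)
    filter_upwards [hsmall] with n hn
    have hG := hpos n
    have hGc : (G n : ℂ) ≠ 0 := by exact_mod_cast hG.ne'
    set D := u (n + 1) - u n with hD
    have hDD : (fwdDiff 1)^[1] u n = D := rfl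
    have e1 : z (n + 1) = z n * Complex.exp (Complex.I * (θ * D : ℝ)) := by
      rw [hzdef]
      simp only
      rw [← Complex.exp_add, hD]
      congr 1
      push_cast
      ring
    have e2 : Complex.exp (Complex.I * (θ * D : ℝ)) =
        Complex.exp (Complex.I * (θ * G n : ℝ)) *
          Complex.exp (Complex.I * (θ * (D - G n) : ℝ)) := by
      rw [← Complex.exp_add]
      congr 1
      push_cast
      ring
    have b1 : ‖Complex.exp (Complex.I * (θ * (D - G n) : ℝ)) - 1‖ ≤ |θ| * |D - G n| := by
      refine Real.norm_exp_I_mul_ofReal_sub_one_le.trans ?_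
      rw [Real.norm_eq_abs, abs_mul]
    have b2 : ‖Complex.exp (Complex.I * (θ * G n : ℝ)) - 1 - Complex.I * (θ * G n : ℝ)‖
        ≤ θ ^ 2 * G n ^ 2 := by
      have hnorm : ‖Complex.I * ((θ * G n : ℝ) : ℂ)‖ = |θ| * G n := by
        rw [norm_mul, Complex.norm_I, one_mul, Complex.norm_real, Real.norm_eq_abs, abs_mul,
          abs_of_pos hG]
      refine (Complex.norm_exp_sub_one_sub_id_le (by rw [hnorm]; exact hn.le)).trans ?_
      rw [hnorm, mul_pow, sq_abs]
    have b3 : ‖Complex.exp (Complex.I * (θ * D : ℝ)) - 1 - Complex.I * (θ * G n : ℝ)‖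
        ≤ |θ| * |D - G n| + θ ^ 2 * G n ^ 2 := by
      have e3 : Complex.exp (Complex.I * (θ * D : ℝ)) - 1 - Complex.I * (θ * G n : ℝ) =
          Complex.exp (Complex.I * (θ * G n : ℝ)) *
            (Complex.exp (Complex.I * (θ * (D - G n) : ℝ)) - 1) +
          (Complex.exp (Complex.I * (θ * G n : ℝ)) - 1 - Complex.I * (θ * G n : ℝ)) := by
        rw [e2]; ring
      rw [e3]
      refine (norm_add_le _ _).trans (add_le_add ?_ b2)
      rw [norm_mul, Complex.norm_exp_I_mul_ofReal, one_mul]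
      exact b1
    have e4 : Complex.I * θ * z n - (z (n + 1) - z n) / (G n : ℂ) =
        -(z n * (Complex.exp (Complex.I * (θ * D : ℝ)) - 1 - Complex.I * (θ * G n : ℝ))
          / (G n : ℂ)) := by
      rw [e1]
      push_cast
      field_simp
      ring
    rw [e4, norm_neg, norm_div, norm_mul, hz, one_mul, Complex.norm_real, Real.norm_eq_abs,
      abs_of_pos hG, div_le_iff₀ hG, hDD, smul_eq_mul, smul_eq_mul]
    have e5 : |D / G n - 1| * G n = |D - G n| := by
      rw [show D / G n - 1 = (D - G n) / G n by field_simp, abs_div, abs_of_pos hG]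
      field_simp
    calc _ ≤ _ := b3
      _ = _ := by rw [← e5]; ring
  have h3 := (h2.add h1).const_mul (Complex.I * θ)⁻¹
  have hne : Complex.I * (θ : ℂ) ≠ 0 := by simp [hθ]
  refine h3.congr fun N => ?_
  congr 1
  refine Finset.sum_congr rfl fun n _ => ?_
  beta_reduce
  rw [sub_add_cancel, inv_mul_cancel_left₀ hne]

/-- Differencing with step `j` lowers the order of the difference condition by one; the monotone
comparison sequence is multiplied by `j`. -/
lemma HasFejerDiff.shift_sub {h : ℕ} {u : ℕ → ℝ} (hu : HasFejerDiff (h + 1) u) {j : ℕ}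
    (hj : 1 ≤ j) : HasFejerDiff h (fun n => u (n + j) - u n) := by
  obtain ⟨G, hpos, hanti, hzero, hinf, hmean⟩ := hu
  have hj0 : (0 : ℝ) < j := by exact_mod_cast hj
  refine ⟨fun n => j * G n, fun n => by have := hpos n; positivity,
    fun m n hmn => mul_le_mul_of_nonneg_left (hanti hmn) hj0.le, ?_, ?_, ?_⟩
  · simpa using hzero.const_mul (j : ℝ)
  · refine (hinf.const_mul_atTop hj0).congr fun n => by ring
  · have hdiff : ∀ n, (fwdDiff 1)^[h] (fun n => u (n + j) - u n) n =
        ∑ i ∈ Finset.range j, (fwdDiff 1)^[h + 1] u (n + i) := by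
      intro n
      have e : (fun n => u (n + j) - u n) =
          ∑ i ∈ Finset.range j, fun n => fwdDiff 1 u (n + i) := by
        ext n
        rw [Finset.sum_apply]
        exact (Finset.sum_range_sub (fun i => u (n + i)) j).symm
      rw [e, fwdDiff_iter_finsetSum, Finset.sum_apply]
      refine Finset.sum_congr rfl fun i _ => ?_
      rw [fwdDiff_iter_comp_add, Function.iterate_succ_apply]
    have hbound : MeanZero (fun n => (j : ℝ)⁻¹ * ∑ i ∈ Finset.range j,
        (|(fwdDiff 1)^[h + 1] u (n + i) / G (n + i) - 1| + (1 - G (n + i) / G n))) :=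
      (MeanZero.sum _ fun i _ => (hmean.shift_nat i).add
        (meanZero_one_sub_ratio_nat hpos hanti hinf i)).const_mul _
    refine hbound.of_le fun n => ?_
    have e : (fwdDiff 1)^[h] (fun n => u (n + j) - u n) n / (j * G n) - 1 =
        (j : ℝ)⁻¹ * ∑ i ∈ Finset.range j, ((fwdDiff 1)^[h + 1] u (n + i) / G n - 1) := by
      rw [hdiff, Finset.sum_sub_distrib, ← Finset.sum_div]
      have := (hpos n).ne'
      simp
      field_simp
    rw [norm_abs_eq_norm, e, norm_mul, norm_inv, Real.norm_natCast]
    gcongr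
    refine norm_sum_le_of_le _ fun i _ => ?_
    have hGn := hpos n
    have hGi := hpos (n + i)
    have hr : G (n + i) / G n ≤ 1 := (div_le_one hGn).2 (hanti (by omega))
    have hr0 := div_pos hGi hGn
    set A := (fwdDiff 1)^[h + 1] u (n + i)
    have e2 : A / G n - 1 = (A / G (n + i) - 1) * (G (n + i) / G n) - (1 - G (n + i) / G n) := by
      field_simp
      ring
    rw [Real.norm_eq_abs, e2]
    refine (abs_sub _ _).trans ?_
    rw [abs_mul, abs_of_pos hr0, abs_of_nonneg (sub_nonneg.2 hr)]
    gcongr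
    exact mul_le_of_le_one_right (abs_nonneg _) hr

/-- Induction on the order via van der Corput differencing. -/
lemma HasFejerDiff.meanZero {h : ℕ} (hh : 1 ≤ h) {u : ℕ → ℝ} (hu : HasFejerDiff h u) {θ : ℝ}
    (hθ : θ ≠ 0) : MeanZero (fun n => Complex.exp (Complex.I * (θ * u n : ℝ))) := by
  induction h, hh using Nat.le_induction generalizing u with
  | base => exact hu.meanZero_one hθ
  | succ h _ ih =>
    refine meanZero_of_correlations (fun n => Complex.norm_exp_I_mul_ofReal _) fun j hj => ?_
    refine (ih (hu.shift_sub hj)).congr fun N => ?_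
    congr 1
    refine Finset.sum_congr rfl fun n _ => ?_
    beta_reduce
    rw [← Complex.exp_conj, ← Complex.exp_add]
    congr 1
    simp only [map_mul, Complex.conj_I, Complex.conj_ofReal]
    push_cast
    ring

/-- Mean value theorem for iterated differences: `Δ^h f(x) = f^(h)(ξ)` for some
`ξ ∈ [x, x + h]`, where `F i` plays the role of `f^(i)`. -/
lemma exists_fwdDiff_iter_eq (h : ℕ) (x₀ : ℝ) (F : ℕ → ℝ → ℝ)
    (hF : ∀ i < h, ∀ x ≥ x₀, HasDerivAt (F i) (F (i + 1) x) x) {x : ℝ} (hx : x₀ ≤ x) :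
    ∃ ξ ∈ Set.Icc x (x + h), (fwdDiff 1)^[h] (F 0) x = F h ξ := by
  induction h generalizing F with
  | zero => exact ⟨x, by simp, rfl⟩
  | succ h ih =>
    obtain ⟨ξ, hξ, he⟩ := ih (fun i => fwdDiff 1 (F i)) fun i hi y hy =>
      ((hF i (by omega) (y + 1) (by linarith)).comp_add_const y 1).sub (hF i (by omega) y hy)
    obtain ⟨η, hη, he'⟩ := exists_hasDerivAt_eq_slope (F h) (F (h + 1)) (a := ξ) (b := ξ + 1)
      (by linarith)
      (fun y hy => (hF h (by omega) y
        (hx.trans (hξ.1.trans hy.1))).continuousAt.continuousWithinAt)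
      (fun y hy => hF h (by omega) y (hx.trans (hξ.1.trans hy.1.le)))
    refine ⟨η, ⟨hξ.1.trans hη.1.le, ?_⟩, ?_⟩
    · have := hξ.2
      have := hη.2
      push_cast
      linarith
    · rw [Function.iterate_succ_apply, he, he', add_sub_cancel_left, div_one]
      rfl

/-! ### Weyl's criterion on the circle -/

open MeasureTheory AddCircle in
/-- Weyl's criterion for continuous test functions: trigonometric polynomials are dense. -/
lemma meanZero_continuous {v : ℕ → UnitAddCircle}
    (hv : ∀ m : ℤ, m ≠ 0 → MeanZero (fun n => fourier m (v n)))
    (φ : C(UnitAddCircle, ℂ)) :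
    MeanZero (fun n => φ (v n) - ∫ x, φ x ∂haarAddCircle) := by
  have hint : ∀ f : C(UnitAddCircle, ℂ), Integrable f haarAddCircle := fun f =>
    f.continuous.integrable_of_hasCompactSupport (HasCompactSupport.of_compactSpace f)
  have hspan : ∀ ψ ∈ Submodule.span ℂ (Set.range (fourier (T := (1 : ℝ)))),
      MeanZero (fun n => ψ (v n) - ∫ x, ψ x ∂haarAddCircle) := by
    intro ψ hψ
    induction hψ using Submodule.span_induction with
    | mem f hf =>
      obtain ⟨m, rfl⟩ := hf
      by_cases hm : m = 0
      · subst hm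
        simpa using MeanZero.of_tendsto (E := ℂ) tendsto_const_nhds
      · rw [integral_eq_zero_of_add_right_eq_neg (μ := haarAddCircle)
          (fourier_add_half_inv_index hm one_pos)]
        simpa using hv m hm
    | zero => simpa using MeanZero.of_tendsto (E := ℂ) tendsto_const_nhds
    | add f g _ _ hf hg =>
      refine (hf.add hg).congr fun N => ?_
      congr 1
      refine Finset.sum_congr rfl fun n _ => ?_
      simp only [ContinuousMap.add_apply]
      rw [integral_add (hint f) (hint g)]
      ring
    | smul c f _ hf =>
      refine (hf.const_mul c).congr fun N => ?_
      congr 1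
      refine Finset.sum_congr rfl fun n _ => ?_
      simp only [ContinuousMap.smul_apply, smul_eq_mul]
      rw [integral_const_mul]
      ring
  have hφ : φ ∈ closure
      (Submodule.span ℂ (Set.range (fourier (T := (1 : ℝ)))) : Set C(UnitAddCircle, ℂ)) := by
    rw [← Submodule.topologicalClosure_coe, span_fourier_closure_eq_top]
    trivial
  rw [MeanZero, Metric.tendsto_atTop]
  intro ε hε
  obtain ⟨ψ, hψ, hd⟩ := Metric.mem_closure_iff.1 hφ (ε / 4) (by positivity)
  rw [dist_eq_norm] at hd
  obtain ⟨N₀, hN₀⟩ := Metric.tendsto_atTop.1 (hspan ψ hψ) (ε / 2) (by positivity)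
  refine ⟨N₀, fun N hN => ?_⟩
  have h1 := hN₀ N hN
  rw [dist_zero_right] at h1 ⊢
  have hpt : ∀ x, ‖φ x - ψ x‖ ≤ ε / 4 := fun x =>
    ((φ - ψ).norm_coe_le_norm x).trans hd.le
  have hI : ‖∫ x, φ x ∂haarAddCircle - ∫ x, ψ x ∂haarAddCircle‖ ≤ ε / 4 := by
    rw [← integral_sub (hint φ) (hint ψ)]
    refine (norm_integral_le_of_norm_le_const (C := ε / 4) (Eventually.of_forall hpt)).trans ?_
    simp
  have h2 : ‖(N : ℝ)⁻¹ • ∑ n ∈ Finset.range N,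
      ((φ (v n) - ∫ x, φ x ∂haarAddCircle) - (ψ (v n) - ∫ x, ψ x ∂haarAddCircle))‖
        ≤ ε / 2 := by
    rw [norm_smul, norm_inv, Real.norm_natCast]
    have : ‖∑ n ∈ Finset.range N,
        ((φ (v n) - ∫ x, φ x ∂haarAddCircle) - (ψ (v n) - ∫ x, ψ x ∂haarAddCircle))‖
          ≤ ∑ n ∈ Finset.range N, (ε / 2) := by
      refine norm_sum_le_of_le _ fun n _ => ?_
      rw [sub_sub_sub_comm]
      refine (norm_sub_le _ _).trans ?_
      linarith [hpt (v n)]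
    rw [Finset.sum_const, Finset.card_range, nsmul_eq_mul] at this
    rcases N.eq_zero_or_pos with rfl | hN0
    · simp; positivity
    · rw [inv_mul_le_iff₀ (by positivity)]
      exact this
  have h1' : ‖(N : ℝ)⁻¹ • ∑ n ∈ Finset.range N, (φ (v n) - ∫ x, φ x ∂haarAddCircle)‖ =
      ‖(N : ℝ)⁻¹ • ∑ n ∈ Finset.range N,
      ((φ (v n) - ∫ x, φ x ∂haarAddCircle) - (ψ (v n) - ∫ x, ψ x ∂haarAddCircle)) +
      (N : ℝ)⁻¹ • ∑ n ∈ Finset.range N, (ψ (v n) - ∫ x, ψ x ∂haarAddCircle)‖ := by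
    rw [← smul_add, ← Finset.sum_add_distrib]
    simp
  rw [h1']
  exact (norm_add_le _ _).trans_lt (by linarith)

open MeasureTheory in
/-- The uniform probability measure on the first `N + 1` points of `v`. -/
noncomputable def empiricalMeasure (v : ℕ → UnitAddCircle) (N : ℕ) : Measure UnitAddCircle :=
  ((N + 1 : ℕ) : ENNReal)⁻¹ • ∑ n ∈ Finset.range (N + 1), Measure.dirac (v n)

open MeasureTheory in
instance (v : ℕ → UnitAddCircle) (N : ℕ) : IsProbabilityMeasure (empiricalMeasure v N) := by
  constructor
  rw [empiricalMeasure, Measure.smul_apply, Measure.finsetSum_apply]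
  simp only [measure_univ, Finset.sum_const, Finset.card_range, nsmul_eq_mul, mul_one, smul_eq_mul]
  exact ENNReal.inv_mul_cancel (by simp) (ENNReal.natCast_ne_top _)

open MeasureTheory AddCircle in
/-- Weyl's criterion for closed arcs: the proportion of `n < N` with `v n` in a closed arc tends
to the length of the arc. -/
lemma tendsto_mean_closedBall {v : ℕ → UnitAddCircle}
    (hv : ∀ m : ℤ, m ≠ 0 → MeanZero (fun n => fourier m (v n)))
    (x : UnitAddCircle) {r : ℝ} (hr : 0 ≤ r) :
    Tendsto (fun N : ℕ => (N : ℝ)⁻¹ * ∑ n ∈ Finset.range N,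
      (Metric.closedBall x r).indicator (fun _ => (1 : ℝ)) (v n)) atTop (𝓝 (min 1 (2 * r))) := by
  have hvol : (volume : Measure UnitAddCircle) = haarAddCircle := by
    rw [volume_eq_smul_haarAddCircle]; simp
  let μ : ProbabilityMeasure UnitAddCircle := ⟨haarAddCircle, inferInstance⟩
  let μs : ℕ → ProbabilityMeasure UnitAddCircle := fun N => ⟨empiricalMeasure v N, inferInstance⟩
  have hlim : Tendsto μs atTop (𝓝 μ) := by
    rw [ProbabilityMeasure.tendsto_iff_forall_integral_tendsto]
    intro f
    have h1 := meanZero_continuous hv ⟨fun x => (f x : ℂ), by fun_prop⟩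
    have h2 := ((Complex.continuous_re.tendsto 0).comp h1).comp (tendsto_add_atTop_nat 1)
    simp only [Complex.zero_re] at h2
    have h3 := h2.add_const (∫ x, f x ∂haarAddCircle)
    rw [zero_add] at h3
    refine h3.congr fun N => ?_
    have hI : ∫ x, (f x : ℂ) ∂haarAddCircle = ((∫ x, f x ∂haarAddCircle : ℝ) : ℂ) :=
      integral_ofReal
    change _ = ∫ x, f x ∂(empiricalMeasure v N)
    rw [empiricalMeasure, integral_smul_measure, integral_finsetSum_measure
      (fun i _ => integrable_dirac (by simp))]
    simp only [integral_dirac, ContinuousMap.coe_mk, Function.comp, hI,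
      Complex.smul_re, Complex.re_sum, Complex.sub_re, Complex.ofReal_re, smul_eq_mul]
    rw [Finset.sum_sub_distrib, ENNReal.toReal_inv, ENNReal.toReal_natCast, Finset.sum_const,
      Finset.card_range, nsmul_eq_mul]
    have : ((N + 1 : ℕ) : ℝ) ≠ 0 := by positivity
    field_simp
    ring
  have hfr : (μ : Measure UnitAddCircle) (frontier (Metric.closedBall x r)) = 0 := by
    refine measure_mono_null (Metric.frontier_closedBall_subset_sphere) ?_
    rw [← Metric.closedBall_sdiff_ball]
    change (haarAddCircle : Measure UnitAddCircle) _ = 0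
    rw [← hvol]
    exact ae_le_set.1 closedBall_ae_eq_ball.le
  have h4 := ProbabilityMeasure.tendsto_measure_of_null_frontier_of_tendsto' hlim hfr
  have h5 := (ENNReal.tendsto_toReal (measure_ne_top _ _)).comp h4
  have h6 : ((μ : Measure UnitAddCircle) (Metric.closedBall x r)).toReal = min 1 (2 * r) := by
    change ((haarAddCircle : Measure UnitAddCircle) (Metric.closedBall x r)).toReal = _
    rw [← hvol, volume_closedBall, ENNReal.toReal_ofReal (by positivity)]
  rw [h6] at h5
  rw [← tendsto_add_atTop_iff_nat 1]
  refine h5.congr fun N => ?_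
  change (empiricalMeasure v N (Metric.closedBall x r)).toReal = _
  rw [empiricalMeasure, Measure.smul_apply, Measure.finsetSum_apply, smul_eq_mul,
    ENNReal.toReal_mul, ENNReal.toReal_inv, ENNReal.toReal_natCast,
    ENNReal.toReal_sum (fun i _ => measure_ne_top _ _)]
  congr 1
  refine Finset.sum_congr rfl fun n _ => ?_
  rw [Measure.dirac_apply' _ Metric.isClosed_closedBall.measurableSet]
  by_cases h : v n ∈ Metric.closedBall x r <;> simp [h]

/-! ### Leading digits as arcs -/

/-- If `a` begins with `d`, then `log_k a` lies in the arc from `log_k d` to `log_k (d + 1)`. -/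

lemma beginsWith_mem_closedBall {k d a : ℕ} (hk : 2 ≤ k) (hd : 0 < d) (ha : 0 < a)
    (h : BeginsWith k d a) :
    (Real.logb k a : UnitAddCircle) ∈ Metric.closedBall
      (((Real.logb k d + Real.logb k (d + 1)) / 2 : ℝ) : UnitAddCircle)
      ((Real.logb k (d + 1) - Real.logb k d) / 2) := by
  obtain ⟨m, h1, h2⟩ := h
  have hk1 : (1 : ℝ) < k := by exact_mod_cast hk
  have hd0 : (0 : ℝ) < d := by exact_mod_cast hd
  have ha0 : (0 : ℝ) < a := by exact_mod_cast ha
  have hkm : (0 : ℝ) < (k : ℝ) ^ m := by positivity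
  have hlogk : Real.logb k ((k : ℝ) ^ m) = m := by
    rw [← Real.rpow_natCast, Real.logb_rpow (by positivity) hk1.ne']
  rw [abs_of_pos ha0] at h1 h2
  have h3 := Real.logb_le_logb_of_le hk1 (by positivity) h1
  have h4 := Real.logb_le_logb_of_le hk1 ha0 h2.le
  rw [Real.logb_mul hd0.ne' hkm.ne', hlogk] at h3
  rw [Real.logb_mul (by positivity) hkm.ne', hlogk] at h4
  rw [Metric.mem_closedBall, dist_eq_norm, ← AddCircle.coe_sub, UnitAddCircle.norm_eq]
  refine (round_le _ (m : ℤ)).trans ?_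
  rw [abs_le]
  push_cast
  constructor <;> linarith

/-- Conversely, if `log_k a` lies in the arc, then `a` begins with `d`, or it is the right endpoint
of the arc, or the integer `m` in the definition would be negative, which forces `a ≤ d`. -/
lemma beginsWith_or_of_mem_closedBall {k d a : ℕ} (hk : 2 ≤ k) (hd : 0 < d) (ha : 0 < a)
    (h : (Real.logb k a : UnitAddCircle) ∈ Metric.closedBall
      (((Real.logb k d + Real.logb k (d + 1)) / 2 : ℝ) : UnitAddCircle)
      ((Real.logb k (d + 1) - Real.logb k d) / 2)) :
    BeginsWith k d a ∨
      ∃ q < d + 2, (Real.logb k a : UnitAddCircle) = (Real.logb k q : UnitAddCircle) := by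
  have hk1 : (1 : ℝ) < k := by exact_mod_cast hk
  have hk0 : (0 : ℝ) < k := by positivity
  have hd0 : (0 : ℝ) < d := by exact_mod_cast hd
  have ha0 : (0 : ℝ) < a := by exact_mod_cast ha
  rw [Metric.mem_closedBall, dist_eq_norm, ← AddCircle.coe_sub, UnitAddCircle.norm_eq] at h
  set j := round (Real.logb k a - (Real.logb k d + Real.logb k (d + 1)) / 2)
  rw [abs_le] at h
  have hlow : Real.logb k d + j ≤ Real.logb k a := by linarith
  have hup : Real.logb k a ≤ Real.logb k (d + 1) + j := by linarith
  rcases hup.eq_or_lt with heq | hlt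
  · refine Or.inr ⟨d + 1, by omega, ?_⟩
    rw [heq, AddCircle.coe_add]
    have : ((j : ℝ) : UnitAddCircle) = 0 := (AddCircle.coe_eq_zero_iff 1).2 ⟨j, by simp⟩
    rw [this, add_zero]
    push_cast
    rfl
  · rcases le_or_gt 0 j with hj | hj
    · obtain ⟨m, hm⟩ := Int.eq_ofNat_of_zero_le hj
      refine Or.inl ⟨m, ?_⟩
      have hkm : (0 : ℝ) < (k : ℝ) ^ m := by positivity
      have hlogk : Real.logb k ((k : ℝ) ^ m) = m := by
        rw [← Real.rpow_natCast, Real.logb_rpow hk0 hk1.ne']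
      rw [hm] at hlow hlt
      push_cast at hlow hlt
      rw [abs_of_pos ha0]
      rw [← hlogk, ← Real.logb_mul hd0.ne' hkm.ne',
        Real.logb_le_logb hk1 (by positivity) ha0] at hlow
      rw [← hlogk, ← Real.logb_mul (by positivity) hkm.ne',
        Real.logb_lt_logb_iff hk1 ha0 (by positivity)] at hlt
      exact ⟨hlow, hlt⟩
    · refine Or.inr ⟨a, ?_, rfl⟩
      have hj' : (j : ℝ) ≤ 0 := by exact_mod_cast hj.le
      have : Real.logb k a < Real.logb k (d + 1) := by linarith
      rw [Real.logb_lt_logb_iff hk1 ha0 (by positivity)] at this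
      have : a < d + 1 := by exact_mod_cast this
      omega

/-- Weyl's criterion for leading digits in base `k`. -/
lemma hasNatDensity_beginsWith {a : ℕ → ℕ} (ha : ∀ n, 0 < a n) {k : ℕ} (hk : 2 ≤ k)
    (hv : ∀ m : ℤ, m ≠ 0 →
      MeanZero (fun n => fourier m (Real.logb k (a n) : UnitAddCircle)))
    {d : ℕ} (hd : 0 < d) :
    HasNatDensity {n | BeginsWith k d (a n)} (Real.logb k (d + 1) - Real.logb k d) := by
  classical
  have hk1 : (1 : ℝ) < k := by exact_mod_cast hk
  have hd0 : (0 : ℝ) < d := by exact_mod_cast hd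
  set v : ℕ → UnitAddCircle := fun n => (Real.logb k (a n) : UnitAddCircle)
  set t := Real.logb k d
  set s := Real.logb k (d + 1)
  have hts : t ≤ s := Real.logb_le_logb_of_le hk1 hd0 (by linarith)
  -- the arc is not longer than the circle, since `d + 1 ≤ 2 d ≤ k d`
  have hst : s ≤ 1 + t := by
    have : (d : ℝ) + 1 ≤ k * d := by
      have h1 : (2 : ℝ) ≤ k := by exact_mod_cast hk
      have h2 : (1 : ℝ) ≤ d := by exact_mod_cast hd
      nlinarith
    have := Real.logb_le_logb_of_le hk1 (by positivity) this
    rwa [Real.logb_mul (by positivity) hd0.ne', Real.logb_self_eq_one hk1] at this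
  set B := Metric.closedBall (((t + s) / 2 : ℝ) : UnitAddCircle) ((s - t) / 2)
  have hB := tendsto_mean_closedBall hv (((t + s) / 2 : ℝ) : UnitAddCircle)
    (r := (s - t) / 2) (by linarith)
  rw [show min 1 (2 * ((s - t) / 2)) = s - t by
    rw [mul_div_cancel₀ _ two_ne_zero, min_eq_right (by linarith)]] at hB
  have hpt : ∀ x : UnitAddCircle, MeanZero (fun n => ({x} : Set _).indicator
      (fun _ => (1 : ℝ)) (v n)) := by
    intro x
    have := tendsto_mean_closedBall hv x (le_refl 0)
    rw [Metric.closedBall_zero, mul_zero, min_eq_right zero_le_one] at this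
    exact this
  have hpts : MeanZero (fun n => ∑ q ∈ Finset.range (d + 2),
      ({(Real.logb k q : UnitAddCircle)} : Set UnitAddCircle).indicator
        (fun _ => (1 : ℝ)) (v n)) := MeanZero.sum _ fun q _ => hpt _
  have hdiff : MeanZero (fun n => (if BeginsWith k d (a n) then (1 : ℝ) else 0) -
      B.indicator (fun _ => (1 : ℝ)) (v n)) := by
    refine hpts.of_le fun n => ?_
    have hnn : ∀ q ∈ Finset.range (d + 2), 0 ≤
        ({(Real.logb k q : UnitAddCircle)} : Set UnitAddCircle).indicator
        (fun _ => (1 : ℝ)) (v n) := fun q _ => Set.indicator_nonneg (by simp) _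
    by_cases h1 : BeginsWith k d (a n)
    · have h2 : v n ∈ B := beginsWith_mem_closedBall hk hd (ha n) h1
      simpa [h1, h2] using Finset.sum_nonneg hnn
    · by_cases h2 : v n ∈ B
      · obtain ⟨q, hq, he⟩ := (beginsWith_or_of_mem_closedBall hk hd (ha n) h2).resolve_left h1
        refine le_trans ?_ (Finset.single_le_sum hnn (Finset.mem_range.2 hq))
        have : v n = (Real.logb k q : UnitAddCircle) := he
        rw [this] at h2
        simp [h1, this, h2]
      · simpa [h1, h2] using Finset.sum_nonneg hnn
  have := Tendsto.add hdiff hB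
  rw [zero_add] at this
  refine this.congr fun N => ?_
  rw [smul_eq_mul, ← mul_add, ← Finset.sum_add_distrib,
    Finset.sum_congr rfl fun n _ => sub_add_cancel _ _]
  rw [Finset.sum_boole, div_eq_inv_mul]
  congr!

/-! ### The growth conditions on `b` and `c` -/

lemma fwdDiff_iter_natCast (h : ℕ) (f : ℝ → ℝ) (n : ℕ) :
    (fwdDiff 1)^[h] (fun n : ℕ => f n) n = (fwdDiff 1)^[h] f (n : ℝ) := by
  simp [fwdDiff_iter_eq_sum_shift]

/-- The difference condition follows if the `h`-th differences are values of a function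
asymptotic to an antitone `G`, at points at distance at most `h`. -/
lemma hasFejerDiff_of_values {h : ℕ} {u : ℕ → ℝ} {G D : ℝ → ℝ} {X : ℝ}
    (hanti : AntitoneOn G (Set.Ici X)) (hpos : ∀ x ≥ X, 0 < G x)
    (hzero : Tendsto G atTop (𝓝 0)) (hinf : Tendsto (fun x => x * G x) atTop atTop)
    (hD : Tendsto (fun x => D x / G x) atTop (𝓝 1))
    (hu : ∀ n : ℕ, X ≤ n → ∃ ξ ∈ Set.Icc (n : ℝ) (n + h), (fwdDiff 1)^[h] u n = D ξ) :
    HasFejerDiff h u := by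
  obtain ⟨M, hM⟩ := exists_nat_ge X
  have hMX : ∀ n : ℕ, X ≤ ((max n M : ℕ) : ℝ) := fun n =>
    hM.trans (by exact_mod_cast le_max_right _ _)
  set G' : ℕ → ℝ := fun n => G ((max n M : ℕ) : ℝ) with hG'
  have hpos' : ∀ n, 0 < G' n := fun n => hpos _ (hMX n)
  have hanti' : Antitone G' := fun m n hmn =>
    hanti (hMX m) (hMX n) (by exact_mod_cast max_le_max_right M hmn)
  have hev : ∀ n : ℕ, M ≤ n → G' n = G n := fun n hn => by rw [hG']; simp only; rw [max_eq_left hn]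
  have hinf' : Tendsto (fun n : ℕ => n * G' n) atTop atTop := by
    refine (hinf.comp tendsto_natCast_atTop_atTop).congr' ?_
    filter_upwards [eventually_ge_atTop M] with n hn
    rw [hev n hn]; rfl
  have hzero' : Tendsto G' atTop (𝓝 0) := by
    refine (hzero.comp tendsto_natCast_atTop_atTop).congr' ?_
    filter_upwards [eventually_ge_atTop M] with n hn
    rw [hev n hn]; rfl
  refine ⟨G', hpos', hanti', hzero', hinf', ?_⟩
  have hex : ∀ n : ℕ, ∃ ξ : ℝ, (n : ℝ) ≤ ξ ∧
      (M ≤ n → ξ ≤ n + h ∧ (fwdDiff 1)^[h] u n = D ξ) := by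
    intro n
    by_cases hn : M ≤ n
    · obtain ⟨ξ, hξ, he⟩ := hu n (hM.trans (by exact_mod_cast hn))
      exact ⟨ξ, hξ.1, fun _ => ⟨hξ.2, he⟩⟩
    · exact ⟨n, le_rfl, fun h => absurd h hn⟩
  choose ξ hξ hξ' using hex
  have hξlim : Tendsto ξ atTop atTop := tendsto_atTop_mono hξ tendsto_natCast_atTop_atTop
  have herr : Tendsto (fun n => |D (ξ n) / G (ξ n) - 1|) atTop (𝓝 0) := by
    have := ((hD.comp hξlim).sub_const 1).abs
    simpa using this
  refine ((MeanZero.of_tendsto herr).add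
    (meanZero_one_sub_ratio_nat hpos' hanti' hinf' h)).of_eventually_le ?_
  filter_upwards [eventually_ge_atTop M] with n hn
  obtain ⟨h1, h2⟩ := hξ' n hn
  have hnX : X ≤ n := hM.trans (by exact_mod_cast hn)
  have hξX : X ≤ ξ n := hnX.trans (hξ n)
  rw [h2, hev n hn, hev (n + h) (by omega), norm_abs_eq_norm, Real.norm_eq_abs]
  have g0 := hpos _ hnX
  have g1 := hpos _ hξX
  have g2 : G (ξ n) ≤ G n := hanti hnX hξX (hξ n)
  have g3 : G ((n + h : ℕ) : ℝ) ≤ G (ξ n) :=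
    hanti hξX (hξX.trans (by push_cast; exact h1)) (by push_cast; exact h1)
  have hr : G (ξ n) / G n ≤ 1 := (div_le_one g0).2 g2
  have hr0 := div_pos g1 g0
  have hr' : G ((n + h : ℕ) : ℝ) / G n ≤ G (ξ n) / G n := by gcongr
  have e : D (ξ n) / G n - 1 =
      (D (ξ n) / G (ξ n) - 1) * (G (ξ n) / G n) - (1 - G (ξ n) / G n) := by
    field_simp
    ring
  rw [e]
  refine (abs_sub _ _).trans ?_
  rw [abs_mul, abs_of_pos hr0, abs_of_nonneg (sub_nonneg.2 hr)]
  have := mul_le_of_le_one_right (abs_nonneg (D (ξ n) / G (ξ n) - 1)) hr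
  linarith

/-- Since `c^(h)` is eventually monotone, tends to zero and does not vanish, it has a constant sign
`σ`, and `σ (log b + c)` satisfies the difference condition of order `h`. -/
lemma exists_sign_hasFejerDiff (b c : ℝ → ℝ) (h : ℕ) (x₀ : ℝ)
    (hcdiff : ∀ i < h, ∀ x ≥ x₀, DifferentiableAt ℝ (iteratedDeriv i c) x)
    (hczero : Tendsto (iteratedDeriv h c) atTop (𝓝 0))
    (hcmono : ∃ x₁ : ℝ, MonotoneOn (iteratedDeriv h c) (Set.Ici x₁) ∨
      AntitoneOn (iteratedDeriv h c) (Set.Ici x₁))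
    (hcinf : Tendsto (fun x : ℝ => x * |iteratedDeriv h c x|) atTop atTop)
    (hbdiff : ∀ i < h, ∀ x ≥ x₀,
      DifferentiableAt ℝ (iteratedDeriv i (fun x => Real.log (b x))) x)
    (hratio : Tendsto
      (fun x : ℝ => iteratedDeriv h (fun x => Real.log (b x)) x / iteratedDeriv h c x)
      atTop (𝓝 0)) :
    ∃ σ : ℝ, σ ≠ 0 ∧ HasFejerDiff h (fun n : ℕ => σ * (Real.log (b n) + c n)) := by
  set g := iteratedDeriv h c with hg
  set β := fun x => Real.log (b x)
  obtain ⟨x₁, hx₁⟩ := hcmono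
  obtain ⟨x₂, hx₂⟩ := eventually_atTop.1 (hcinf.eventually_gt_atTop 0)
  have hne : ∀ x ≥ x₂, g x ≠ 0 := fun x hx h0 => by
    have := hx₂ x hx
    simp [h0] at this
  obtain ⟨σ, hσ, hanti⟩ : ∃ σ : ℝ, |σ| = 1 ∧ AntitoneOn (fun x => σ * g x) (Set.Ici x₁) := by
    rcases hx₁ with hm | ha
    · exact ⟨-1, by simp, fun x hx y hy hxy => by simpa using hm hx hy hxy⟩
    · exact ⟨1, by simp, fun x hx y hy hxy => by simpa using ha hx hy hxy⟩
  have hσ0 : σ ≠ 0 := by rintro rfl; simp at hσ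
  have hzero : Tendsto (fun x => σ * g x) atTop (𝓝 0) := by simpa using hczero.const_mul σ
  have hnn : ∀ x ≥ x₁, 0 ≤ σ * g x := fun x hx => by
    refine le_of_tendsto hzero ?_
    filter_upwards [eventually_ge_atTop x] with y hy
    exact hanti hx (hx.trans hy : x₁ ≤ y) hy
  set X := max x₀ (max x₁ x₂)
  have hX0 : x₀ ≤ X := le_max_left _ _
  have hX1 : x₁ ≤ X := (le_max_left _ _).trans (le_max_right _ _)
  have hX2 : x₂ ≤ X := (le_max_right _ _).trans (le_max_right _ _)
  have hpos : ∀ x ≥ X, 0 < σ * g x := fun x hx =>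
    (hnn x (hX1.trans hx)).lt_of_ne' (mul_ne_zero hσ0 (hne x (hX2.trans hx)))
  set F : ℕ → ℝ → ℝ := fun i x => σ * (iteratedDeriv i β x + iteratedDeriv i c x) with hFdef
  have hF : ∀ i < h, ∀ x ≥ X, HasDerivAt (F i) (F (i + 1) x) x := by
    intro i hi x hx
    have h1 := (hbdiff i hi x (hX0.trans hx)).hasDerivAt
    have h2 := (hcdiff i hi x (hX0.trans hx)).hasDerivAt
    rw [← iteratedDeriv_succ] at h1 h2
    exact (h1.add h2).const_mul σ
  refine ⟨σ, hσ0, hasFejerDiff_of_values (G := fun x => σ * g x) (D := F h) (X := X)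
    (hanti.mono (Set.Ici_subset_Ici.2 hX1)) hpos hzero ?_ ?_ ?_⟩
  · refine hcinf.congr' ?_
    filter_upwards [eventually_ge_atTop X] with x hx
    rw [← abs_of_pos (hpos x hx), abs_mul, hσ, one_mul]
  · have : Tendsto (fun x => iteratedDeriv h β x / g x + 1) atTop (𝓝 (0 + 1)) :=
      hratio.add_const 1
    rw [zero_add] at this
    refine this.congr' ?_
    filter_upwards [eventually_ge_atTop x₂] with x hx
    have := hne x hx
    rw [hFdef]
    simp only
    rw [← hg]
    field_simp
  · intro n hn
    obtain ⟨ξ, hξ, he⟩ := exists_fwdDiff_iter_eq h X F hF hn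
    refine ⟨ξ, hξ, ?_⟩
    rw [← he, ← fwdDiff_iter_natCast]
    simp [hFdef, β]

/-- A "good" sequence `a(n) ~ b(n)·e^{c(n)}` is Benford. -/
theorem isBenford_of_good (a : ℕ → ℤ) (ha : ∀ n, 0 < a n)
    (b c : ℝ → ℝ) (hb : ∀ x : ℝ, 0 < b x)
    (hasymp : Tendsto (fun n : ℕ => (a n : ℝ) / (b n * Real.exp (c n)))
      atTop (𝓝 1))
    (h : ℕ) (hh : 1 ≤ h) (x₀ : ℝ)
    -- (1) `c` is `h`-times differentiable on `[x₀, ∞)`, `c⁽ʰ⁾(x) → 0`,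
    -- and `c⁽ʰ⁾` is monotonic for all sufficiently large `x`:
    (hcdiff : ∀ i < h, ∀ x ≥ x₀, DifferentiableAt ℝ (iteratedDeriv i c) x)
    (hczero : Tendsto (iteratedDeriv h c) atTop (𝓝 0))
    (hcmono : ∃ x₁ : ℝ, MonotoneOn (iteratedDeriv h c) (Set.Ici x₁) ∨
      AntitoneOn (iteratedDeriv h c) (Set.Ici x₁))
    -- (2) `x·|c⁽ʰ⁾(x)| → ∞`:
    (hcinf : Tendsto (fun x : ℝ => x * |iteratedDeriv h c x|) atTop atTop)
    -- (3) `log ∘ b` is `h`-times differentiable on `[x₀, ∞)` and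
    -- `(log b)⁽ʰ⁾(x)/c⁽ʰ⁾(x) → 0`:
    (hbdiff : ∀ i < h, ∀ x ≥ x₀,
      DifferentiableAt ℝ (iteratedDeriv i (fun x => Real.log (b x))) x)
    (hratio : Tendsto
      (fun x : ℝ => iteratedDeriv h (fun x => Real.log (b x)) x / iteratedDeriv h c x)
      atTop (𝓝 0)) :
    IsBenford (fun n => (a n : ℝ)) := by
  obtain ⟨σ, hσ, hu⟩ := exists_sign_hasFejerDiff b c h x₀ hcdiff hczero hcmono hcinf hbdiff hratio
  intro k hk d hd
  have hk1 : (1 : ℝ) < k := by exact_mod_cast hk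
  have hlogk : Real.log k ≠ 0 := (Real.log_pos hk1).ne'
  have hcast : ∀ n, (((a n).toNat : ℕ) : ℝ) = (a n : ℝ) := fun n => by
    exact_mod_cast Int.toNat_of_nonneg (ha n).le
  have hlog : Tendsto (fun n : ℕ => Real.log (a n) - (Real.log (b n) + c n)) atTop (𝓝 0) := by
    have h1 := (Real.continuousAt_log one_ne_zero).tendsto.comp hasymp
    rw [Real.log_one] at h1
    refine h1.congr fun n => ?_
    have han : (a n : ℝ) ≠ 0 := by exact_mod_cast (ha n).ne'
    have hbn := (hb n).ne'
    simp only [Function.comp]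
    rw [Real.log_div han (by positivity), Real.log_mul hbn (by positivity), Real.log_exp]
  have key : ∀ m : ℤ, m ≠ 0 →
      MeanZero (fun n => fourier m (Real.logb k ((a n).toNat : ℕ) : UnitAddCircle)) := by
    intro m hm
    -- the frequency turning `σ (log b + c)` into `2πm log_k (b e^c)`
    set θ : ℝ := 2 * Real.pi * m / (Real.log k * σ)
    have hθ : θ ≠ 0 := by
      have : (m : ℝ) ≠ 0 := by exact_mod_cast hm
      have := Real.pi_ne_zero
      positivity
    have h1 := hu.meanZero hh hθ
    have h2 : MeanZero (fun n : ℕ => fourier m (Real.logb k ((a n).toNat : ℕ) : UnitAddCircle) -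
        Complex.exp (Complex.I * (θ * (σ * (Real.log (b n) + c n)) : ℝ))) := by
      have h3 : Tendsto (fun n : ℕ => |θ * σ| *
          |Real.log (a n) - (Real.log (b n) + c n)|) atTop (𝓝 0) := by
        simpa using hlog.abs.const_mul |θ * σ|
      refine MeanZero.of_le (MeanZero.of_tendsto h3) fun n => ?_
      have e1 : fourier m (Real.logb k ((a n).toNat : ℕ) : UnitAddCircle) =
          Complex.exp (Complex.I * (θ * (σ * (Real.log (b n) + c n)) : ℝ)) *
          Complex.exp (Complex.I *
            (θ * σ * (Real.log (a n) - (Real.log (b n) + c n)) : ℝ)) := by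
        rw [fourier_coe_apply, ← Complex.exp_add, ← mul_add, ← Complex.ofReal_add, hcast]
        have e2 : θ * (σ * (Real.log (b n) + c n)) +
            θ * σ * (Real.log (a n) - (Real.log (b n) + c n)) =
            2 * Real.pi * m * Real.logb k (a n) := by
          simp only [θ, Real.logb]
          field_simp
          ring
        rw [e2]
        congr 1
        push_cast
        ring
      rw [e1, ← mul_sub_one, norm_mul, Complex.norm_exp_I_mul_ofReal, one_mul]
      refine Real.norm_exp_I_mul_ofReal_sub_one_le.trans ?_
      rw [Real.norm_eq_abs, abs_mul]
    refine (h2.add h1).congr fun N => ?_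
    congr 1
    refine Finset.sum_congr rfl fun n _ => ?_
    exact sub_add_cancel _ _
  have := hasNatDensity_beginsWith (a := fun n => (a n).toNat)
    (fun n => by have := ha n; omega) hk key hd
  simpa only [hcast] using this
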